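/- For the Weierstrass zeta function of the lattice L_ω = ω·ℤ[τ] with invariants g₂ = 0, g₃ = 1, one has ζ(√−3·ω/6, L_ω) = −π·i/(3ω) − (i/2)·∛4. -/

import Mathlib

noncomputable section

open Complex Real ComplexConjugate

/-- `τ = (−1+√−3)/2`, a primitive cube root of unity. -/
def tau : ℂ := (-1 + Real.sqrt 3 * Complex.I) / 2

/-- `√−3 = 1 + 2τ`, the square root of `−3` with positive imaginary part. -/
def sqrtm3 : ℂ := Real.sqrt 3 * Complex.I

/-- The ring of integers `O_K = ℤ[τ]` of `K = ℚ(√−3)`, as a subring of `ℂ`. -/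
def Eis : Subring ℂ := Subring.closure {tau}

/-- `τ` as an element of `ℤ[τ]`. -/
def tauO : Eis := ⟨tau, Subring.subset_closure rfl⟩

/-- `√−3` as an element of `ℤ[τ]`. -/
def sqrtm3O : Eis := 1 + 2 * tauO

/-- Membership in the lattice `L_ω = ω·ℤ[τ]`. -/
def inLattice (ω : ℝ) (z : ℂ) : Prop := ∃ a : Eis, z = (ω : ℂ) * a

/-- The Weierstrass `℘`-function of the lattice `L_ω = ω·ℤ[τ]`. -/
def wp (ω : ℝ) (z : ℂ) : ℂ :=
  1 / z ^ 2 + ∑' a : {w : ℂ // inLattice ω w ∧ w ≠ 0},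
    (1 / (z - (a : ℂ)) ^ 2 - 1 / (a : ℂ) ^ 2)

/-- The Weierstrass `ζ`-function of the lattice `L_ω = ω·ℤ[τ]`. -/
def wzeta (ω : ℝ) (z : ℂ) : ℂ :=
  1 / z + ∑' a : {w : ℂ // inLattice ω w ∧ w ≠ 0},
    (1 / (z - (a : ℂ)) + 1 / (a : ℂ) + z / (a : ℂ) ^ 2)

/-- The real cube root of 2, as a complex number. -/
def cbrt2 : ℂ := ((2 : ℝ) ^ ((1 : ℝ) / 3) : ℝ)

/-- The real cube root of 4, as a complex number. -/
def cbrt4 : ℂ := ((4 : ℝ) ^ ((1 : ℝ) / 3) : ℝ)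


open Filter Topology PeriodPair

namespace ZW

variable (L : PeriodPair)

/-- The Weierstrass zeta function with the `l₀`-term missing. -/
def zE (l₀ z : ℂ) : ℂ :=
  ∑' l : L.lattice, if l.1 = l₀ then 0 else (1 / (z - l.1) + 1 / l.1 + z / l.1 ^ 2)

/-- The Weierstrass zeta function. -/
def zW (z : ℂ) : ℂ := ∑' l : L.lattice, (1 / (z - l.1) + 1 / l.1 + z / l.1 ^ 2)

lemma zeta_bound (r : ℝ) (hr : 0 < r) (s : ℂ) (hs : ‖s‖ < r) (l : ℂ) (h : 2 * r ≤ ‖l‖) :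
    ‖1 / (s - l) + 1 / l + s / l ^ 2‖ ≤ 2 * r ^ 2 * ‖l‖ ^ (-3 : ℝ) := by
  have h1 : s - l ≠ 0 := by
    intro h0
    rw [sub_eq_zero] at h0
    subst h0
    linarith
  have h2 : 0 < ‖l‖ := by linarith
  have h3 : l ≠ 0 := norm_pos_iff.mp h2
  have h4 : 1 / (s - l) + 1 / l + s / l ^ 2 = s ^ 2 / ((s - l) * l ^ 2) := by
    field_simp
    ring
  have h5 : ‖l‖ / 2 ≤ ‖s - l‖ := by
    rw [norm_sub_rev]
    exact .trans (by linarith) (norm_sub_norm_le l s)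
  rw [h4, norm_div, norm_mul, norm_pow, norm_pow]
  calc ‖s‖ ^ 2 / (‖s - l‖ * ‖l‖ ^ 2) ≤ r ^ 2 / (‖l‖ / 2 * ‖l‖ ^ 2) := by gcongr
    _ = 2 * r ^ 2 / ‖l‖ ^ 3 := by field_simp
    _ = _ := by
      rw [Real.rpow_neg h2.le, div_eq_mul_inv]
      norm_cast

lemma hasSumLU (l₀ : ℂ) :
    HasSumLocallyUniformly (fun (l : L.lattice) (z : ℂ) ↦
      if l.1 = l₀ then 0 else (1 / (z - l.1) + 1 / l.1 + z / l.1 ^ 2)) (zE L l₀) := by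
  refine L.hasSumLocallyUniformly_aux (u := (2 * · ^ 2 * ‖·‖ ^ (-3 : ℝ))) _
    (fun _ _ ↦ (ZLattice.summable_norm_rpow _ _ (by simp; norm_num)).mul_left _) fun r hr ↦
    Filter.eventually_atTop.mpr ⟨2 * r, ?_⟩
  rintro _ h s hs l rfl
  split_ifs
  · rw [norm_zero]; positivity
  · exact zeta_bound r hr s hs l h

lemma hasSum_zE (l₀ z : ℂ) : HasSum (fun l : L.lattice ↦
      if l.1 = l₀ then 0 else (1 / (z - l.1) + 1 / l.1 + z / l.1 ^ 2)) (zE L l₀ z) :=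
  (hasSumLU L l₀).hasSum

lemma differentiableOn_zE (l₀ : ℂ) : DifferentiableOn ℂ (zE L l₀) (L.lattice \ {l₀})ᶜ := by
  refine (hasSumLU L l₀).hasSumLocallyUniformlyOn.differentiableOn
    (.of_forall fun s ↦ .fun_sum fun i hi ↦ ?_) L.isOpen_compl_lattice_sdiff
  split_ifs
  · simp
  · refine .add (.add (.div (by fun_prop) (by fun_prop) ?_) (by fun_prop)) (by fun_prop)
    intro x hx h0
    rw [sub_eq_zero] at h0
    subst h0
    simp_all

lemma deriv_zE (l₀ : ℂ) : Set.EqOn (deriv (zE L l₀)) (fun z ↦ - L.weierstrassPExcept l₀ z)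
    (L.lattice \ {l₀})ᶜ := by
  refine ((hasSumLU L l₀).tendstoLocallyUniformlyOn.deriv
    (.of_forall fun s ↦ ?_) L.isOpen_compl_lattice_sdiff).unique ?_
  · refine .fun_sum fun i hi ↦ ?_
    split_ifs
    · simp
    refine .add (.add (.div (by fun_prop) (by fun_prop) ?_) (by fun_prop)) (by fun_prop)
    intro x hx h0
    rw [sub_eq_zero] at h0
    subst h0
    simp_all
  · have hn := (L.hasSumLocallyUniformly_weierstrassPExcept l₀).tendstoLocallyUniformlyOn
      (s := (L.lattice \ {l₀} : Set ℂ)ᶜ)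
    refine TendstoLocallyUniformlyOn.congr (F := fun s z ↦ - ∑ l ∈ s,
      if l.1 = l₀ then 0 else (1 / (z - l.1) ^ 2 - 1 / l.1 ^ 2)) ?_ ?_
    · exact hn.neg
    intro s z hz
    change _ = deriv (fun z ↦ ∑ l ∈ s, _) z
    have key : ∀ x ∈ s, HasDerivAt (fun z : ℂ ↦
      if x.1 = l₀ then 0 else (1 / (z - x.1) + 1 / x.1 + z / x.1 ^ 2))
      (-(if x.1 = l₀ then 0 else (1 / (z - x.1) ^ 2 - 1 / x.1 ^ 2))) z := by
      intro x _
      split_ifs with hl₁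
      · simpa using hasDerivAt_const z (0 : ℂ)
      have h1 : z - x.1 ≠ 0 := fun e ↦ hl₁ (by
        obtain rfl := sub_eq_zero.mp e
        simpa using hz)
      have h2 := ((((hasDerivAt_id' z).sub_const x.1).fun_inv h1).add_const (1 / x.1)).fun_add
        ((hasDerivAt_id' z).div_const (x.1 ^ 2))
      simp only [one_div] at h2 ⊢
      refine h2.congr_deriv ?_
      rw [neg_div, one_div]
      ring
    rw [(HasDerivAt.fun_sum key).deriv, Finset.sum_neg_distrib]

lemma zE_add (l₀ : L.lattice) (z : ℂ) :
    zE L l₀ z + (1 / (z - l₀.1) + 1 / l₀.1 + z / l₀.1 ^ 2) = zW L z := by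
  trans zE L l₀ z + ∑' i : L.lattice,
    if i = l₀.1 then (1 / (z - l₀.1) + 1 / l₀.1 + z / l₀.1 ^ 2) else 0
  · simp
  rw [zE, ← Summable.tsum_add]
  · rw [zW]; congr with w; split_ifs <;> simp only [zero_add, add_zero, *]
  · exact ⟨_, hasSum_zE L _ _⟩
  · exact summable_of_hasFiniteSupport ((Set.finite_singleton l₀).subset (by simp))

lemma zE_of_notMem (l₀ : ℂ) (hl : l₀ ∉ L.lattice) : zE L l₀ = zW L := by
  ext z
  rw [zE, zW]
  congr with l
  rw [if_neg]
  exact fun e ↦ hl (e ▸ l.2)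

lemma hasSum_zW (z : ℂ) :
    HasSum (fun l : L.lattice ↦ (1 / (z - l.1) + 1 / l.1 + z / l.1 ^ 2)) (zW L z) := by
  have h := hasSum_zE L (L.ω₁ / 2) z
  rw [zE_of_notMem L _ L.ω₁_div_two_notMem_lattice] at h
  convert h using 2 with l
  rw [if_neg]
  exact fun e ↦ L.ω₁_div_two_notMem_lattice (e ▸ l.2)

lemma hasDerivAt_zW {z : ℂ} (hz : z ∉ L.lattice) :
    HasDerivAt (zW L) (- L.weierstrassP z) z := by
  have hmem : (L.lattice \ {z} : Set ℂ)ᶜ ∈ 𝓝 z := L.compl_lattice_sdiff_singleton_mem_nhds z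
  have h1 := ((differentiableOn_zE L z).differentiableAt hmem).hasDerivAt
  rw [deriv_zE L z (x := z) (by simp), zE_of_notMem L z hz, L.weierstrassPExcept_of_notMem z hz]
    at h1
  exact h1

lemma zW_neg (z : ℂ) : zW L (-z) = - zW L z := by
  rw [zW, zW, ← tsum_neg, ← (Equiv.neg L.lattice).tsum_eq]
  congr with l
  have : (-z - -l.1) = -(z - l.1) := by ring
  simp only [Equiv.neg_apply, NegMemClass.coe_neg, this]
  rw [div_neg, div_neg]
  ring

lemma zW_zero : zW L 0 = 0 := by
  have := zW_neg L 0
  rw [neg_zero] at this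
  exact CharZero.eq_neg_self_iff.mp this

end ZW
namespace ZW

lemma sqrt3_sq : ((Real.sqrt 3 : ℝ) : ℂ) ^ 2 = 3 := by
  norm_cast
  exact Real.sq_sqrt (by norm_num)

lemma tau_sq : tau ^ 2 = -1 - tau := by
  have h := sqrt3_sq
  have hI := Complex.I_sq
  rw [tau]
  linear_combination (1 / 4) * (3 : ℂ) * hI + (1 / 4) * Complex.I ^ 2 * h

lemma tau_cube : tau ^ 3 = 1 := by
  linear_combination (tau - 1) * tau_sq

lemma tau_ne : tau ≠ 0 := by
  intro h
  have := tau_cube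
  rw [h] at this
  norm_num at this

lemma tau_eq : tau = ((-1 / 2 : ℝ) : ℂ) + ((Real.sqrt 3 / 2 : ℝ) : ℂ) * Complex.I := by
  rw [tau]; push_cast; ring

lemma tau_re : tau.re = -1 / 2 := by
  rw [tau_eq]; simp

lemma tau_im : tau.im = Real.sqrt 3 / 2 := by
  rw [tau_eq]; simp

lemma conj_tau : conj tau = tau ^ 2 := by
  rw [tau_sq, tau_eq]
  simp only [map_add, map_mul, Complex.conj_ofReal, Complex.conj_I]
  push_cast
  ring

lemma sqrtm3_eq : sqrtm3 = 1 + 2 * tau := by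
  rw [tau, sqrtm3]; ring

/-- The period pair `(ω, ωτ)`. -/
def Lp (ω : ℝ) (hω : 0 < ω) : PeriodPair where
  ω₁ := ω
  ω₂ := ω * tau
  indep := by
    rw [LinearIndependent.pair_iff]
    intro s t h
    have h3 : 0 < Real.sqrt 3 := Real.sqrt_pos.mpr (by norm_num)
    have him := congrArg Complex.im h
    have hre := congrArg Complex.re h
    simp [tau_im, tau_re] at him hre
    have ht : t = 0 := by
      rcases him with h | h
      · exact h
      · linarith
    subst ht
    simp at hre
    exact ⟨hre.resolve_right hω.ne', rfl⟩

variable (ω : ℝ) (hω : 0 < ω)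

lemma mem_Lp {z : ℂ} : z ∈ (Lp ω hω).lattice ↔ ∃ m n : ℤ, z = ω * (m + n * tau) := by
  rw [PeriodPair.mem_lattice]
  refine exists_congr fun m ↦ exists_congr fun n ↦ ?_
  simp only [Lp]
  constructor
  · intro h; rw [← h]; ring
  · intro h; rw [h]; ring

lemma mem_Eis {z : ℂ} : z ∈ Eis ↔ ∃ m n : ℤ, z = m + n * tau := by
  constructor
  · intro h
    induction h using Subring.closure_induction with
    | mem x hx => exact ⟨0, 1, by simp_all⟩
    | zero => exact ⟨0, 0, by simp⟩
    | one => exact ⟨1, 0, by simp⟩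
    | add x y _ _ hx hy =>
      obtain ⟨a, b, rfl⟩ := hx
      obtain ⟨c, d, rfl⟩ := hy
      exact ⟨a + c, b + d, by push_cast; ring⟩
    | neg x _ hx =>
      obtain ⟨a, b, rfl⟩ := hx
      exact ⟨-a, -b, by push_cast; ring⟩
    | mul x y _ _ hx hy =>
      obtain ⟨a, b, rfl⟩ := hx
      obtain ⟨c, d, rfl⟩ := hy
      refine ⟨a * c - b * d, a * d + b * c - b * d, ?_⟩
      push_cast
      linear_combination (b * d : ℂ) * tau_sq
  · rintro ⟨m, n, rfl⟩
    exact add_mem (intCast_mem _ m) (mul_mem (intCast_mem _ n) tauO.2)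

lemma inLattice_iff {z : ℂ} : inLattice ω z ↔ z ∈ (Lp ω hω).lattice := by
  rw [mem_Lp]
  constructor
  · rintro ⟨⟨a, ha⟩, rfl⟩
    obtain ⟨m, n, rfl⟩ := mem_Eis.mp ha
    exact ⟨m, n, rfl⟩
  · rintro ⟨m, n, rfl⟩
    exact ⟨⟨_, mem_Eis.mpr ⟨m, n, rfl⟩⟩, rfl⟩

lemma tsum_reindex (g : ℂ → ℂ) :
    ∑' l : (Lp ω hω).lattice, (if l.1 = 0 then 0 else g l.1) =
      ∑' a : {w : ℂ // inLattice ω w ∧ w ≠ 0}, g a.1 := by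
  have h1 := tsum_subtype ((Lp ω hω).lattice : Set ℂ) (fun l ↦ if l = 0 then 0 else g l)
  have h2 := tsum_subtype {w : ℂ | inLattice ω w ∧ w ≠ 0} g
  refine h1.trans (Eq.trans ?_ h2.symm)
  congr with x
  simp only [Set.indicator, SetLike.mem_coe, Set.mem_ofPred_eq, inLattice_iff ω hω, ne_eq]
  by_cases ha : x ∈ (Lp ω hω).lattice <;> by_cases hb : x = 0 <;>
    simp [ha, hb, inLattice_iff ω hω]

lemma wp_eq : wp ω = (Lp ω hω).weierstrassP := by
  ext z
  have h := (Lp ω hω).weierstrassPExcept_add 0 z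
  rw [← h, wp, ← tsum_reindex ω hω (fun a ↦ 1 / (z - a) ^ 2 - 1 / a ^ 2), weierstrassPExcept]
  simp
  ring

lemma wzeta_eq : wzeta ω = zW (Lp ω hω) := by
  ext z
  have h := zE_add (Lp ω hω) 0 z
  rw [← h, wzeta, ← tsum_reindex ω hω (fun a ↦ 1 / (z - a) + 1 / a + z / a ^ 2), zE]
  simp
  ring

/-- Multiplication by `τ` on the lattice. -/
def tauEquiv : (Lp ω hω).lattice ≃ (Lp ω hω).lattice where
  toFun l := ⟨tau * l.1, by
    obtain ⟨m, n, h⟩ := (mem_Lp ω hω).mp l.2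
    refine (mem_Lp ω hω).mpr ⟨-n, m - n, ?_⟩
    rw [h]; push_cast; linear_combination (ω * n : ℂ) * tau_sq⟩
  invFun l := ⟨tau ^ 2 * l.1, by
    obtain ⟨m, n, h⟩ := (mem_Lp ω hω).mp l.2
    refine (mem_Lp ω hω).mpr ⟨n - m, -m, ?_⟩
    rw [h]; push_cast; linear_combination (ω * m : ℂ) * tau_sq + (ω * n : ℂ) * tau_cube⟩
  left_inv l := by
    ext; simp only; linear_combination l.1 * tau_cube
  right_inv l := by
    ext; simp only; linear_combination l.1 * tau_cube

/-- Complex conjugation on the lattice. -/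
def conjEquiv : (Lp ω hω).lattice ≃ (Lp ω hω).lattice :=
  Function.Involutive.toPerm (fun l ↦ ⟨conj l.1, by
    obtain ⟨m, n, h⟩ := (mem_Lp ω hω).mp l.2
    refine (mem_Lp ω hω).mpr ⟨m - n, -n, ?_⟩
    rw [h]
    simp only [map_add, map_mul, Complex.conj_ofReal, map_intCast, conj_tau]
    push_cast
    linear_combination (ω * n : ℂ) * tau_sq⟩)
    (fun l ↦ by ext; simp)

lemma conjEquiv_coe (l : (Lp ω hω).lattice) : (conjEquiv ω hω l).1 = conj l.1 := rfl

lemma zW_tau (z : ℂ) : zW (Lp ω hω) (tau * z) = tau ^ 2 * zW (Lp ω hω) z := by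
  rw [zW, zW, ← tsum_mul_left, ← (tauEquiv ω hω).tsum_eq]
  congr with l
  have h0 := tau_ne
  have hi : tau⁻¹ = tau ^ 2 := by
    refine inv_eq_of_mul_eq_one_right ?_
    linear_combination tau_cube
  simp only [tauEquiv, Equiv.coe_fn_mk, ← mul_sub, mul_inv, div_eq_mul_inv, mul_pow, hi]
  have h6 : (tau ^ 2)⁻¹ = tau := by rw [← hi, inv_inv]
  rw [h6]
  ring

lemma wP_tau (z : ℂ) :
    (Lp ω hω).weierstrassP (tau * z) = tau * (Lp ω hω).weierstrassP z := by
  rw [weierstrassP, weierstrassP, ← tsum_mul_left, ← (tauEquiv ω hω).tsum_eq]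
  congr with l
  have h6 : (tau ^ 2)⁻¹ = tau := by
    refine inv_eq_of_mul_eq_one_right ?_
    linear_combination tau_cube
  simp only [tauEquiv, Equiv.coe_fn_mk, ← mul_sub, one_div, mul_inv, mul_pow, h6]

lemma wP_conj (z : ℂ) :
    (Lp ω hω).weierstrassP (conj z) = conj ((Lp ω hω).weierstrassP z) := by
  rw [weierstrassP, weierstrassP, Complex.conj_tsum, ← (conjEquiv ω hω).tsum_eq]
  congr with l
  simp [conjEquiv_coe]

lemma wP'_conj (z : ℂ) :
    (Lp ω hω).derivWeierstrassP (conj z) = conj ((Lp ω hω).derivWeierstrassP z) := by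
  rw [derivWeierstrassP, derivWeierstrassP, map_neg, Complex.conj_tsum,
    ← (conjEquiv ω hω).tsum_eq]
  congr with l
  simp [conjEquiv_coe, map_ofNat]

end ZW
namespace ZW

/-- `τ` as a point of the upper half-plane. -/
def tauH : UpperHalfPlane := ⟨tau, by rw [tau_im]; positivity⟩

lemma tauH_coe : (tauH : ℂ) = tau := rfl

lemma sqrt3I_ne : (Real.sqrt 3 : ℂ) ≠ 0 := by
  intro h
  have := sqrt3_sq
  rw [h] at this
  norm_num at this

lemma G2_tau : EisensteinSeries.G2 tauH = 2 * Real.pi / Real.sqrt 3 := by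
  have h := EisensteinSeries.G2_S_transform tauH
  have hS : ((ModularGroup.S • tauH : UpperHalfPlane) : ℂ) = tau + 1 := by
    rw [UpperHalfPlane.modular_S_smul]
    change (-tau)⁻¹ = tau + 1
    refine inv_eq_of_mul_eq_one_right ?_
    linear_combination -tau_sq
  have hT : EisensteinSeries.G2 (ModularGroup.S • tauH) = EisensteinSeries.G2 tauH := by
    rw [EisensteinSeries.G2_eq_tsum_cexp, EisensteinSeries.G2_eq_tsum_cexp, hS, tauH_coe]
    rw [mul_add, mul_one, Complex.exp_add, Complex.exp_two_pi_mul_I, mul_one]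
  rw [hT, tauH_coe] at h
  have h1 : (tau ^ 2)⁻¹ = tau := by
    refine inv_eq_of_mul_eq_one_right ?_
    linear_combination tau_cube
  have h2 : tau⁻¹ = tau ^ 2 := by
    refine inv_eq_of_mul_eq_one_right ?_
    linear_combination tau_cube
  rw [h1, div_eq_mul_inv, h2] at h
  have h3 : EisensteinSeries.G2 tauH * (Real.sqrt 3 * Complex.I) = 2 * Real.pi * Complex.I := by
    have h4 : (Real.sqrt 3 * Complex.I : ℂ) = 1 + 2 * tau := sqrtm3_eq
    rw [h4]
    linear_combination tau * h + 2 * Real.pi * Complex.I * tau_cube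
      + EisensteinSeries.G2 tauH * tau_sq
  rw [eq_div_iff sqrt3I_ne]
  refine mul_right_cancel₀ Complex.I_ne_zero ?_
  linear_combination h3

lemma tendsto_inv_lin (c w : ℂ) (hw : w ≠ 0) (s : ℤ → ℂ)
    (hs : Tendsto (fun n : ℕ ↦ ‖s n‖) atTop atTop) :
    Tendsto (fun n : ℕ ↦ 1 / (c - w * s n)) atTop (𝓝 0) := by
  simp_rw [one_div]
  refine tendsto_inv₀_cobounded.comp ?_
  rw [← tendsto_norm_atTop_iff_cobounded]
  have h1 : Tendsto (fun n : ℕ ↦ ‖w‖ * ‖s n‖ - ‖c‖) atTop atTop :=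
    tendsto_atTop_add_const_right _ _ (hs.const_mul_atTop (norm_pos_iff.mpr hw))
  refine tendsto_atTop_mono (fun n ↦ ?_) h1
  rw [norm_sub_rev, ← norm_mul]
  exact norm_sub_norm_le _ _

lemma row_zero (c w : ℂ) (hw : w ≠ 0)
    (hs : Summable fun n : ℤ ↦ 1 / (c + w - w * n) - 1 / (c - w * n)) :
    ∑' n : ℤ, (1 / (c + w - w * n) - 1 / (c - w * n)) = 0 := by
  have h1 := hs.hasSum.comp (Finset.tendsto_Ico_neg (R := ℤ))
  have h2 : Tendsto (fun N : ℕ ↦ 1 / (c + w - w * ((-N : ℤ) : ℂ)) - 1 / (c + w - w * ((N : ℤ) : ℂ)))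
      atTop (𝓝 0) := by
    have ha := tendsto_inv_lin (c + w) w hw (fun n ↦ ((-n : ℤ) : ℂ)) (by
      simpa using tendsto_natCast_atTop_atTop (R := ℝ))
    have hb := tendsto_inv_lin (c + w) w hw (fun n ↦ ((n : ℤ) : ℂ)) (by
      simpa using tendsto_natCast_atTop_atTop (R := ℝ))
    simpa using ha.sub hb
  refine tendsto_nhds_unique h1 (h2.congr fun N ↦ ?_)
  have h3 := Finset.sum_Ico_int_sub N (fun n : ℤ ↦ 1 / (c + w - w * (n : ℂ)))
  simp only [Function.comp_apply]
  rw [← h3]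
  refine Finset.sum_congr rfl fun n _ ↦ ?_
  push_cast
  congr 2
  ring

variable (ω : ℝ) (hω : 0 < ω)

lemma zW_add_omega (z : ℂ) :
    zW (Lp ω hω) (z + ω) = zW (Lp ω hω) z + 2 * Real.pi / (Real.sqrt 3 * ω) := by
  have hw : (ω : ℂ) ≠ 0 := by exact_mod_cast hω.ne'
  have hsum := (hasSum_zW (Lp ω hω) (z + ω)).sub (hasSum_zW (Lp ω hω) z)
  rw [← ((Equiv.prodComm ℤ ℤ).trans (Lp ω hω).latticeEquivProd.symm.toEquiv).hasSum_iff] at hsum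
  have hs2 : HasSum (fun p : ℤ × ℤ ↦ (1 / ((z - ω * (p.1 * tau)) + ω - ω * p.2) -
      1 / ((z - ω * (p.1 * tau)) - ω * p.2)) + (ω : ℂ)⁻¹ * ((p.1 * tau + p.2) ^ 2)⁻¹)
      (zW (Lp ω hω) (z + ω) - zW (Lp ω hω) z) := by
    refine Eq.mp (congrArg (HasSum · _) (funext fun p ↦ ?_)) hsum
    have hl : (((Equiv.prodComm ℤ ℤ).trans (Lp ω hω).latticeEquivProd.symm.toEquiv) p).1 =
        ω * (p.1 * tau + p.2) := by
      have := (Lp ω hω).latticeEquiv_symm_apply (p.2, p.1)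
      simp only [Lp] at this
      refine Eq.trans this ?_
      ring
    simp only [Function.comp_apply, hl]
    have e1 : z - ω * (p.1 * tau) + ω - ω * p.2 = z + ω - ω * (p.1 * tau + p.2) := by ring
    have e2 : z - ω * (p.1 * tau) - ω * p.2 = z - ω * (p.1 * tau + p.2) := by ring
    rw [e1, e2]
    have e3 : (z + ω) / (ω * (p.1 * tau + p.2)) ^ 2 - z / (ω * (p.1 * tau + p.2)) ^ 2 =
        (ω : ℂ)⁻¹ * ((p.1 * tau + p.2 : ℂ) ^ 2)⁻¹ := by
      rw [← sub_div, add_sub_cancel_left, mul_pow, div_eq_mul_inv, mul_inv, ← mul_assoc]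
      congr 1
      field_simp
    linear_combination e3
  have hrow2 : ∀ m : ℤ, HasSum (fun n : ℤ ↦ (ω : ℂ)⁻¹ * (((m : ℂ) * tau + n) ^ 2)⁻¹)
      ((ω : ℂ)⁻¹ * EisensteinSeries.e2Summand m tauH) := by
    intro m
    have := (EisensteinSeries.e2Summand_summable m tauH).hasSum.mul_left (ω : ℂ)⁻¹
    refine Eq.mp (congrArg (HasSum · _) (funext fun n ↦ ?_)) this
    simp [EisensteinSeries.eisSummand, tauH_coe, zpow_ofNat]
  have hrow : ∀ m : ℤ, HasSum (fun n : ℤ ↦ (1 / ((z - ω * (m * tau)) + ω - ω * n) -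
      1 / ((z - ω * (m * tau)) - ω * n)) + (ω : ℂ)⁻¹ * ((m * tau + n) ^ 2)⁻¹)
      ((ω : ℂ)⁻¹ * EisensteinSeries.e2Summand m tauH) := by
    intro m
    have h1 : Summable (fun n : ℤ ↦ (1 / ((z - ω * (m * tau)) + ω - ω * n) -
      1 / ((z - ω * (m * tau)) - ω * n)) + (ω : ℂ)⁻¹ * ((m * tau + n) ^ 2)⁻¹) :=
      hs2.summable.prod_factor m
    have h2 : Summable (fun n : ℤ ↦ (1 / ((z - ω * (m * tau)) + ω - ω * n) -
      1 / ((z - ω * (m * tau)) - ω * n))) := by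
      simpa using h1.sub (hrow2 m).summable
    have h3 := h2.hasSum
    rw [row_zero _ _ hw h2] at h3
    simpa using h3.add (hrow2 m)
  have hfin := hs2.prod_fiberwise hrow
  have h4 : Summable (fun m : ℤ ↦ EisensteinSeries.e2Summand m tauH) := by
    have := hfin.summable.mul_left (ω : ℂ)
    simpa [← mul_assoc, hw] using this
  have h5 : EisensteinSeries.G2 tauH = ∑' m : ℤ, EisensteinSeries.e2Summand m tauH :=
    tsum_eq_of_summable_unconditional h4
  have h6 := hfin.tsum_eq
  rw [tsum_mul_left, ← h5, G2_tau] at h6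
  have h3 := sqrt3I_ne
  have h7 : (ω : ℂ)⁻¹ * (2 * Real.pi / Real.sqrt 3) = 2 * Real.pi / (Real.sqrt 3 * ω) := by
    field_simp
  linear_combination -h6 + h7

/-- The quasi-period of `ω`. -/
def eta1 (ω : ℝ) : ℂ := 2 * Real.pi / (Real.sqrt 3 * ω)

lemma zW_add_omega_tau (z : ℂ) :
    zW (Lp ω hω) (z + ω * tau) = zW (Lp ω hω) z + tau ^ 2 * eta1 ω := by
  have h : z + ω * tau = tau * (tau ^ 2 * z + ω) := by
    linear_combination -z * tau_cube
  have h2 : z = tau * (tau ^ 2 * z) := by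
    linear_combination -z * tau_cube
  rw [h, zW_tau, zW_add_omega]
  conv_rhs => rw [h2, zW_tau]
  rw [eta1]
  ring

/-- The periodic modification of `ζ`. -/
def zA (z : ℂ) : ℂ := zW (Lp ω hω) z - eta1 ω / ω * conj z

lemma zA_omega : Function.Periodic (zA ω hω) ω := by
  have hw : (ω : ℂ) ≠ 0 := by exact_mod_cast hω.ne'
  intro z
  rw [zA, zA, zW_add_omega, map_add, Complex.conj_ofReal, eta1]
  field_simp
  ring

lemma zA_omega_tau : Function.Periodic (zA ω hω) (ω * tau) := by
  have hw : (ω : ℂ) ≠ 0 := by exact_mod_cast hω.ne'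
  intro z
  rw [zA, zA, zW_add_omega_tau, map_add, map_mul, Complex.conj_ofReal, conj_tau]
  field_simp
  ring

lemma zA_periodic (l : ℂ) (hl : l ∈ (Lp ω hω).lattice) : Function.Periodic (zA ω hω) l := by
  obtain ⟨m, n, rfl⟩ := (mem_Lp ω hω).mp hl
  have h := ((zA_omega ω hω).int_mul m).add_period ((zA_omega_tau ω hω).int_mul n)
  have e : (ω : ℂ) * (m + n * tau) = m * ω + n * (ω * tau) := by ring
  rw [e]
  exact h

lemma zW_add_coe (z l : ℂ) (hl : l ∈ (Lp ω hω).lattice) :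
    zW (Lp ω hω) (z + l) = zW (Lp ω hω) z + eta1 ω / ω * conj l := by
  have := zA_periodic ω hω l hl z
  rw [zA, zA, map_add] at this
  linear_combination this

end ZW
namespace ZW

variable (ω : ℝ) (hω : 0 < ω)

/-- The auxiliary function which will be shown to vanish. -/
def FF (w z : ℂ) : ℂ :=
  (zW (Lp ω hω) (z + w) + zW (Lp ω hω) (z - w) - 2 * zW (Lp ω hω) z) *
    ((Lp ω hω).weierstrassP z - (Lp ω hω).weierstrassP w) - (Lp ω hω).derivWeierstrassP z

lemma FF_periodic (w l : ℂ) (hl : l ∈ (Lp ω hω).lattice) (z : ℂ) :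
    FF ω hω w (z + l) = FF ω hω w z := by
  have h1 := (Lp ω hω).weierstrassP_add_coe z ⟨l, hl⟩
  have h2 := (Lp ω hω).derivWeierstrassP_add_coe z ⟨l, hl⟩
  simp only at h1 h2
  have h3 : z + l + w = z + w + l := by ring
  have h4 : z + l - w = z - w + l := by ring
  rw [FF, FF, h1, h2, h3, h4, zW_add_coe ω hω _ l hl, zW_add_coe ω hω _ l hl,
    zW_add_coe ω hω _ l hl]
  ring

lemma FF_neg (w z : ℂ) : FF ω hω w (-z) = - FF ω hω w z := by
  have h3 : -z + w = -(z - w) := by ring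
  have h4 : -z - w = -(z + w) := by ring
  rw [FF, FF, h3, h4, zW_neg, zW_neg, zW_neg, weierstrassP_neg, derivWeierstrassP_neg]
  ring

lemma FF_zero (w : ℂ) : FF ω hω w 0 = 0 := by
  have := FF_neg ω hω w 0
  rw [neg_zero] at this
  exact CharZero.eq_neg_self_iff.mp this

lemma wP'_half (w : ℂ) (h2 : 2 * w ∈ (Lp ω hω).lattice) : (Lp ω hω).derivWeierstrassP w = 0 := by
  have h := (Lp ω hω).derivWeierstrassP_add_coe (-w) ⟨2 * w, h2⟩
  have h3 : -w + 2 * w = w := by ring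
  simp only [h3, derivWeierstrassP_neg] at h
  exact CharZero.eq_neg_self_iff.mp h

lemma FF_analytic_off (w z : ℂ) (h2 : 2 * w ∈ (Lp ω hω).lattice)
    (hz : z ∉ (Lp ω hω).lattice) (hzw : z - w ∉ (Lp ω hω).lattice) :
    DifferentiableAt ℂ (FF ω hω w) z := by
  have hzw' : z + w ∉ (Lp ω hω).lattice := by
    intro h
    apply hzw
    have := sub_mem h h2
    convert this using 1
    ring
  have d1 : DifferentiableAt ℂ (fun z ↦ zW (Lp ω hω) (z + w)) z :=
    ((hasDerivAt_zW _ hzw').comp_add_const z w).differentiableAt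
  have d2 : DifferentiableAt ℂ (fun z ↦ zW (Lp ω hω) (z - w)) z :=
    ((hasDerivAt_zW _ hzw).comp_sub_const z w).differentiableAt
  have d3 := (hasDerivAt_zW _ hz).differentiableAt
  have d4 := ((Lp ω hω).analyticOnNhd_weierstrassP z hz).differentiableAt
  have d5 := ((Lp ω hω).analyticOnNhd_derivWeierstrassP z hz).differentiableAt
  exact ((d1.add d2).sub (d3.const_mul 2)).mul (d4.sub_const _) |>.sub d5

lemma FF_at_w (w : ℂ) (hw : w ∉ (Lp ω hω).lattice) (h2 : 2 * w ∈ (Lp ω hω).lattice) :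
    DifferentiableAt ℂ (FF ω hω w) w := by
  have hP := (Lp ω hω).analyticOnNhd_weierstrassP w hw
  have hds : DifferentiableAt ℂ (dslope (Lp ω hω).weierstrassP w) w := by
    have := (Complex.differentiableOn_dslope (c := w)
      ((Lp ω hω).isClosed_lattice.isOpen_compl.mem_nhds hw)).mpr
      (Lp ω hω).differentiableOn_weierstrassP
    exact this.differentiableAt ((Lp ω hω).isClosed_lattice.isOpen_compl.mem_nhds hw)
  have hE : DifferentiableAt ℂ (zE (Lp ω hω) 0) (w - w) := by
    rw [sub_self]
    exact (differentiableOn_zE (Lp ω hω) 0).differentiableAt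
      ((Lp ω hω).compl_lattice_sdiff_singleton_mem_nhds 0)
  have hE' : DifferentiableAt ℂ (fun z ↦ zE (Lp ω hω) 0 (z - w)) w :=
    hE.comp w (f := fun z ↦ z - w) (by fun_prop)
  have d3 := (hasDerivAt_zW _ hw).differentiableAt
  have d5 := ((Lp ω hω).analyticOnNhd_derivWeierstrassP w hw).differentiableAt
  have key : FF ω hω w = fun z ↦ (2 * zE (Lp ω hω) 0 (z - w) + eta1 ω / ω * conj (2 * w)
      - 2 * zW (Lp ω hω) z) * ((Lp ω hω).weierstrassP z - (Lp ω hω).weierstrassP w)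
      + 2 * dslope (Lp ω hω).weierstrassP w z - (Lp ω hω).derivWeierstrassP z := by
    ext z
    have e1 : z + w = z - w + 2 * w := by ring
    rw [FF, e1, zW_add_coe ω hω _ _ h2, ← zE_add (Lp ω hω) 0 (z - w)]
    by_cases hz : z = w
    · subst hz
      rw [dslope_same, deriv_weierstrassP, wP'_half ω hω z h2]
      ring
    · rw [dslope_of_ne _ hz, slope_def_field]
      have : z - w ≠ 0 := sub_ne_zero.mpr hz
      simp
      field_simp
      ring
  rw [key]
  exact ((((hE'.const_mul 2).add_const _).sub (d3.const_mul 2)).mul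
    (hP.differentiableAt.sub_const _)).add (hds.const_mul 2) |>.sub d5

lemma FF_at_zero (w : ℂ) (hw : w ∉ (Lp ω hω).lattice) :
    DifferentiableAt ℂ (FF ω hω w) 0 := by
  set L := Lp ω hω with hL
  set e := L.weierstrassP w with he
  have hw' : -w ∉ L.lattice := fun h ↦ hw (by simpa using neg_mem h)
  -- a neighbourhood of `0`
  have hU1 : (L.lattice \ {0} : Set ℂ)ᶜ ∈ 𝓝 (0 : ℂ) := L.compl_lattice_sdiff_singleton_mem_nhds 0
  have hU2 : ∀ᶠ z in 𝓝 (0 : ℂ), z + w ∉ L.lattice := by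
    have : Tendsto (fun z : ℂ ↦ z + w) (𝓝 0) (𝓝 w) := by
      have := (show Continuous (fun z : ℂ ↦ z + w) by fun_prop).tendsto (0 : ℂ)
      simpa using this
    exact this (L.isClosed_lattice.isOpen_compl.mem_nhds hw)
  have hU3 : ∀ᶠ z in 𝓝 (0 : ℂ), z - w ∉ L.lattice := by
    have : Tendsto (fun z : ℂ ↦ z - w) (𝓝 0) (𝓝 (-w)) := by
      have := (show Continuous (fun z : ℂ ↦ z - w) by fun_prop).tendsto (0 : ℂ)
      simpa using this
    exact this (L.isClosed_lattice.isOpen_compl.mem_nhds hw')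
  have dE : ∀ᶠ z in 𝓝 (0 : ℂ), DifferentiableAt ℂ (zE L 0) z := by
    filter_upwards [eventually_mem_nhds_iff.mpr hU1] with z hz
    exact (differentiableOn_zE L 0).differentiableAt hz
  have aP : AnalyticAt ℂ (L.weierstrassPExcept 0) 0 := L.analyticAt_weierstrassPExcept 0
  have aQ : AnalyticAt ℂ (L.derivWeierstrassPExcept 0) 0 := L.analyticAt_derivWeierstrassPExcept 0
  set K : ℂ → ℂ := fun z ↦ zW L (z + w) + zW L (z - w) - 2 * zE L 0 z + 2 * e * z with hK
  have aK : AnalyticAt ℂ K 0 := by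
    rw [Complex.analyticAt_iff_eventually_differentiableAt]
    filter_upwards [dE, hU2, hU3] with z h1 h2 h3
    have d1 := ((hasDerivAt_zW _ h2).comp_add_const z w).differentiableAt
    have d2 := ((hasDerivAt_zW _ h3).comp_sub_const z w).differentiableAt
    exact ((d1.add d2).sub (h1.const_mul 2)).add ((differentiableAt_id).const_mul _)
  have K0 : K 0 = 0 := by
    have h0 := zE_add L 0 0
    simp [zW_zero] at h0
    simp [hK, zW_neg, h0]
  have K1 : deriv K 0 = 0 := by
    have d1 := (hasDerivAt_zW L (z := 0 + w) (by simpa using hw)).comp_add_const 0 w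
    have d2 := (hasDerivAt_zW L (z := 0 - w) (by simpa using hw')).comp_sub_const 0 w
    have d3 := (dE.self_of_nhds).hasDerivAt
    rw [deriv_zE L 0 (x := 0) (by simp)] at d3
    have d4 := ((d1.add d2).sub (d3.const_mul 2)).add ((hasDerivAt_id (0 : ℂ)).const_mul (2 * e))
    have d5 : HasDerivAt K _ 0 := d4
    rw [d5.deriv]
    simp [← he]
    ring
  have aD1 : AnalyticAt ℂ (dslope K 0) 0 := by
    obtain ⟨p, hp⟩ := aK
    exact ⟨_, hp.has_fpower_series_dslope_fslope⟩
  have aD2 : AnalyticAt ℂ (dslope (dslope K 0) 0) 0 := by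
    obtain ⟨p, hp⟩ := aD1
    exact ⟨_, hp.has_fpower_series_dslope_fslope⟩
  have aDP : AnalyticAt ℂ (dslope (L.weierstrassPExcept 0) 0) 0 := by
    obtain ⟨p, hp⟩ := aP
    exact ⟨_, hp.has_fpower_series_dslope_fslope⟩
  set G : ℂ → ℂ := fun z ↦ (K z - 2 * e * z) * (L.weierstrassPExcept 0 z - e)
    - L.derivWeierstrassPExcept 0 z + dslope (dslope K 0) 0 z
    - 2 * dslope (L.weierstrassPExcept 0) 0 z with hG
  have aG : AnalyticAt ℂ G 0 := by
    exact ((((aK.sub (analyticAt_const.mul analyticAt_id)).mul (aP.sub analyticAt_const)).sub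
      aQ).add aD2).sub (analyticAt_const.mul aDP)
  have hFG : ∀ z : ℂ, z ≠ 0 → FF ω hω w z = G z := by
    intro z hz
    have e1 := zE_add L 0 z
    have e2 := L.weierstrassPExcept_def 0 z
    have e3 := L.derivWeierstrassPExcept_def 0 z
    have hP0 : L.weierstrassPExcept 0 0 = 0 := L.weierstrassPExcept_zero 0
    simp only [ZeroMemClass.coe_zero] at e1 e2 e3
    rw [hG]
    simp only [dslope_of_ne _ hz, slope_def_field, dslope_same, K1, K0, hP0, sub_zero]
    rw [FF, ← hL, ← he, ← e1, e2, e3, hK]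
    simp
    field_simp
    ring
  have hlim : Tendsto (FF ω hω w) (𝓝[≠] 0) (𝓝 (G 0)) := by
    refine (aG.continuousAt.tendsto.mono_left nhdsWithin_le_nhds).congr' ?_
    filter_upwards [self_mem_nhdsWithin] with z hz
    exact (hFG z hz).symm
  have hlim2 : Tendsto (FF ω hω w) (𝓝[≠] 0) (𝓝 (-(G 0))) := by
    have hn : Tendsto (fun z : ℂ ↦ -z) (𝓝[≠] 0) (𝓝[≠] 0) := by
      refine tendsto_nhdsWithin_iff.mpr ⟨?_, ?_⟩
      · have := (continuous_neg (G := ℂ)).tendsto 0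
        rw [neg_zero] at this
        exact this.mono_left nhdsWithin_le_nhds
      · filter_upwards [self_mem_nhdsWithin] with z hz
        simpa using hz
    have := (hlim.comp hn).neg
    refine this.congr fun z ↦ ?_
    simp [FF_neg]
  have hG0 : G 0 = 0 := CharZero.eq_neg_self_iff.mp (tendsto_nhds_unique hlim hlim2)
  have : FF ω hω w = G := by
    ext z
    by_cases hz : z = 0
    · rw [hz, hG0, FF_zero]
    · exact hFG z hz
  rw [this]
  exact aG.differentiableAt

lemma FF_eq_zero (w : ℂ) (hw : w ∉ (Lp ω hω).lattice) (h2 : 2 * w ∈ (Lp ω hω).lattice) (z : ℂ) :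
    FF ω hω w z = 0 := by
  have trans : ∀ x l : ℂ, l ∈ (Lp ω hω).lattice → DifferentiableAt ℂ (FF ω hω w) x →
      DifferentiableAt ℂ (FF ω hω w) (x + l) := by
    intro x l hl hx
    have h1 : FF ω hω w = fun z ↦ FF ω hω w (z - l) := by
      ext y
      rw [← FF_periodic ω hω w l hl (y - l), sub_add_cancel]
    rw [h1]
    have h3 : DifferentiableAt ℂ (FF ω hω w) (x + l - l) := by rwa [add_sub_cancel_right]
    exact h3.comp (x + l) (f := fun z ↦ z - l) (by fun_prop)
  have hd : Differentiable ℂ (FF ω hω w) := by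
    intro x
    by_cases hx : x ∈ (Lp ω hω).lattice
    · have := trans 0 x hx (FF_at_zero ω hω w hw)
      rwa [zero_add] at this
    by_cases hxw : x - w ∈ (Lp ω hω).lattice
    · have := trans w _ hxw (FF_at_w ω hω w hw h2)
      rwa [add_sub_cancel] at this
    · exact FF_analytic_off ω hω w x h2 hx hxw
  exact (hd.apply_eq_apply_of_bounded (IsZLattice.isCompact_range_of_periodic (Lp ω hω).lattice _
    hd.continuous fun z l hl ↦ FF_periodic ω hω w l hl z).isBounded z 0).trans (FF_zero ω hω w)

end ZW
namespace ZW

section final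
variable (ω : ℝ) (hω : 0 < ω)

lemma imag_notMem (t : ℝ) (h0 : 0 < t) (h1 : t < √3 * ω) :
    Complex.I * (t : ℂ) ∉ (Lp ω hω).lattice := by
  intro h
  obtain ⟨m, n, h⟩ := (mem_Lp ω hω).mp h
  have hre := congrArg Complex.re h
  have him := congrArg Complex.im h
  simp [tau_re, tau_im] at hre him
  have h2 : (m : ℝ) + n * (-1 / 2) = 0 := by
    rcases hre with h | h
    · exact absurd h hω.ne'
    · linarith
  have h3 : (n : ℝ) = 2 * m := by linarith
  rw [h3] at him
  have h4 : t = (√3 * ω) * m := by rw [him]; ring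
  have hp : 0 < √3 * ω := by positivity
  rw [h4] at h0 h1
  have h5 : (0 : ℝ) < m := by
    by_contra hc
    push Not at hc
    nlinarith
  have h6 : (m : ℝ) < 1 := by
    by_contra hc
    push Not at hc
    nlinarith
  have h7 : 0 < m := by exact_mod_cast h5
  have h8 : m < 1 := by exact_mod_cast h6
  omega

lemma wP_conj_imag (t : ℝ) :
    conj ((Lp ω hω).weierstrassP (Complex.I * t)) = (Lp ω hω).weierstrassP (Complex.I * t) := by
  rw [← wP_conj]
  have : conj (Complex.I * (t : ℂ)) = -(Complex.I * t) := by simp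
  rw [this, weierstrassP_neg]

lemma wP'_conj_imag (t : ℝ) :
    conj ((Lp ω hω).derivWeierstrassP (Complex.I * t))
      = -(Lp ω hω).derivWeierstrassP (Complex.I * t) := by
  rw [← wP'_conj]
  have : conj (Complex.I * (t : ℂ)) = -(Complex.I * t) := by simp
  rw [this, derivWeierstrassP_neg]

lemma wP'_hasDeriv {L : PeriodPair}
    (hO : ∀ z : ℂ, z ∉ L.lattice →
      L.derivWeierstrassP z ^ 2 = 4 * L.weierstrassP z ^ 3 - 1)
    (u : ℂ) (hu : u ∉ L.lattice) (hne : L.derivWeierstrassP u ≠ 0)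
    (z : ℂ) (hz : z ∉ L.lattice) :
    HasDerivAt L.derivWeierstrassP (6 * L.weierstrassP z ^ 2) z := by
  have aP := L.analyticOnNhd_weierstrassP
  have aQ := L.analyticOnNhd_derivWeierstrassP
  have key : ∀ x ∈ (L.lattice : Set ℂ)ᶜ,
      L.derivWeierstrassP x * (deriv L.derivWeierstrassP x - 6 * L.weierstrassP x ^ 2) = 0 := by
    intro x hx
    have d1 := (aQ x hx).differentiableAt.hasDerivAt
    have d2 := (aP x hx).differentiableAt.hasDerivAt
    rw [deriv_weierstrassP] at d2
    have d3 := d1.pow 2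
    have d4 := ((d2.pow 3).const_mul 4).sub_const 1
    have e : (fun x ↦ L.derivWeierstrassP x ^ 2) =ᶠ[𝓝 x]
        fun x ↦ 4 * L.weierstrassP x ^ 3 - 1 := by
      filter_upwards [L.isClosed_lattice.isOpen_compl.mem_nhds hx] with y hy using hO y hy
    have d5 := (d4.congr_of_eventuallyEq e).unique d3
    push_cast at d5
    linear_combination (-1 / 2 : ℂ) * d5
  have hconn : IsPreconnected (L.lattice : Set ℂ)ᶜ := by
    refine (Set.Countable.isConnected_compl_of_one_lt_rank (by simp) ?_).2
    exact (countable_of_Lindelof_of_discrete (X := L.lattice))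
  have hd : AnalyticOnNhd ℂ
      (fun x ↦ deriv L.derivWeierstrassP x - 6 * L.weierstrassP x ^ 2) (L.lattice : Set ℂ)ᶜ :=
    fun x hx ↦ (aQ x hx).deriv.sub (analyticAt_const.mul ((aP x hx).pow 2))
  rcases aQ.eq_zero_or_eq_zero_of_mul_eq_zero hd key hconn with h | h
  · exact absurd (h u hu) hne
  · have d1 := (aQ z hz).differentiableAt.hasDerivAt
    rw [sub_eq_zero.mp (h z hz)] at d1
    exact d1

lemma wP'_u_eq
    (hO : ∀ z : ℂ, z ∉ (Lp ω hω).lattice →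
      (Lp ω hω).derivWeierstrassP z ^ 2 = 4 * (Lp ω hω).weierstrassP z ^ 3 - 1)
    (t0 t1 : ℝ) (h0 : 0 < t0) (h01 : t0 ≤ t1) (h1 : t1 < √3 * ω)
    (hu : (Lp ω hω).derivWeierstrassP (Complex.I * t0) ^ 2 = -1)
    (hw : (Lp ω hω).derivWeierstrassP (Complex.I * t1) = 0) :
    (Lp ω hω).derivWeierstrassP (Complex.I * t0) = -Complex.I := by
  set L := Lp ω hω with hL
  have hmem : ∀ t ∈ Set.Icc t0 t1, Complex.I * (t : ℂ) ∉ L.lattice := fun t ht ↦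
    imag_notMem ω hω t (h0.trans_le ht.1) (ht.2.trans_lt h1)
  have hne : L.derivWeierstrassP (Complex.I * t0) ≠ 0 := by
    intro h
    rw [h] at hu
    norm_num at hu
  set r : ℝ → ℝ := fun t ↦ (L.derivWeierstrassP (Complex.I * t)).im with hr
  have hder : ∀ t ∈ Set.Icc t0 t1, HasDerivAt r
      (6 * (L.weierstrassP (Complex.I * t)).re ^ 2) t := by
    intro t ht
    have d := wP'_hasDeriv hO _ (hmem t0 ⟨le_rfl, h01⟩) hne _ (hmem t ht)
    have hi : HasDerivAt (fun s : ℝ ↦ Complex.I * (s : ℂ)) (Complex.I * 1) t :=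
      (Complex.ofRealCLM.hasDerivAt (x := t)).const_mul Complex.I
    have d2 := HasDerivAt.comp (𝕜 := ℝ) t (h₂ := L.derivWeierstrassP)
      (h := fun s : ℝ ↦ Complex.I * (s : ℂ)) d hi
    have d3 := (Complex.imCLM.hasFDerivAt).comp_hasDerivAt t d2
    have hreal := wP_conj_imag ω hω t
    rw [Complex.conj_eq_iff_real] at hreal
    obtain ⟨p, hp⟩ := hreal
    rw [← hL] at hp
    refine HasDerivAt.congr_deriv (f := r) d3 ?_
    rw [hp]
    simp [← Complex.ofReal_pow]
  have hmono : MonotoneOn r (Set.Icc t0 t1) := by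
    refine monotoneOn_of_deriv_nonneg (convex_Icc _ _)
      (fun t ht ↦ (hder t ht).continuousAt.continuousWithinAt)
      (fun t ht ↦ (hder t (interior_subset ht)).differentiableAt.differentiableWithinAt) ?_
    intro t ht
    rw [(hder t (interior_subset ht)).deriv]
    positivity
  have hle := hmono ⟨le_rfl, h01⟩ ⟨h01, le_rfl⟩ h01
  simp only [hr, hw, Complex.zero_im] at hle
  have hfac : (L.derivWeierstrassP (Complex.I * t0) - Complex.I)
      * (L.derivWeierstrassP (Complex.I * t0) + Complex.I) = 0 := by
    linear_combination hu - Complex.I_sq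
  rcases mul_eq_zero.mp hfac with h | h
  · rw [sub_eq_zero.mp h] at hle
    simp at hle
    linarith
  · exact eq_neg_of_add_eq_zero_left h

end final

end ZW

open ZW in
theorem wzeta_value_at_sqrt_point
    (ω : ℝ) (hω : 0 < ω)
    (hODE : ∀ z : ℂ, ¬ inLattice ω z → deriv (wp ω) z ^ 2 = 4 * wp ω z ^ 3 - 1) :
    wzeta ω (sqrtm3 * (ω : ℂ) / 6) =
      -((Real.pi : ℂ) * Complex.I) / (3 * (ω : ℂ)) - (Complex.I / 2) * cbrt4 := by
  have hO : ∀ z : ℂ, z ∉ (Lp ω hω).lattice →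
      (Lp ω hω).derivWeierstrassP z ^ 2 = 4 * (Lp ω hω).weierstrassP z ^ 3 - 1 := by
    intro z hz
    have := hODE z (by rwa [inLattice_iff ω hω])
    rwa [wp_eq ω hω, deriv_weierstrassP] at this
  rw [wzeta_eq ω hω]
  have hω' : (ω : ℂ) ≠ 0 := by exact_mod_cast hω.ne'
  have hs : 0 < √3 := by positivity
  have hss : √3 * √3 = 3 := Real.mul_self_sqrt (by norm_num)
  have hS : sqrtm3 ^ 2 = -3 := by
    rw [sqrtm3, mul_pow, sqrt3_sq, Complex.I_sq]; ring
  have hS0 : sqrtm3 ≠ 0 := by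
    intro h
    rw [h] at hS
    norm_num at hS
  have htS : tau = (sqrtm3 - 1) / 2 := by rw [sqrtm3_eq]; ring
  have hcS : conj sqrtm3 = -sqrtm3 := by simp [sqrtm3]
  have heta : eta1 ω = 2 * Real.pi * Complex.I / (sqrtm3 * ω) := by
    rw [eta1, sqrtm3]
    have := sqrt3I_ne
    field_simp
  set L := Lp ω hω with hL
  set E := eta1 ω with hE
  obtain ⟨t0, ht0⟩ : ∃ t : ℝ, t = √3 * ω / 3 := ⟨_, rfl⟩
  obtain ⟨t1, ht1⟩ : ∃ t : ℝ, t = √3 * ω / 2 := ⟨_, rfl⟩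
  obtain ⟨u, hu⟩ : ∃ u : ℂ, u = Complex.I * t0 := ⟨_, rfl⟩
  obtain ⟨w, hw⟩ : ∃ w : ℂ, w = Complex.I * t1 := ⟨_, rfl⟩
  have hp : 0 < √3 * ω := by positivity
  have hu' : u = sqrtm3 * ω / 3 := by rw [hu, ht0, sqrtm3]; push_cast; ring
  have hw' : w = sqrtm3 * ω / 2 := by rw [hw, ht1, sqrtm3]; push_cast; ring
  have huL : u ∉ L.lattice := by
    rw [hu]; exact imag_notMem ω hω t0 (by rw [ht0]; positivity) (by rw [ht0]; linarith)
  have hwL : w ∉ L.lattice := by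
    rw [hw]; exact imag_notMem ω hω t1 (by rw [ht1]; positivity) (by rw [ht1]; linarith)
  have h2w : 2 * w ∈ L.lattice := by
    refine (mem_Lp ω hω).mpr ⟨1, 2, ?_⟩
    rw [hw', sqrtm3_eq]; push_cast; ring
  have hl : -(ω * (1 + tau)) ∈ L.lattice := by
    refine (mem_Lp ω hω).mpr ⟨-1, -1, ?_⟩
    push_cast; ring
  have htu : tau * u = u + -(ω * (1 + tau)) := by
    rw [hu', htS]; linear_combination (ω / 6 : ℂ) * hS
  -- `℘(u) = 0`
  have hPu : L.weierstrassP u = 0 := by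
    have h1 := wP_tau ω hω u
    have h2 := L.weierstrassP_add_coe u ⟨_, hl⟩
    simp only at h2
    rw [htu, ← hL, h2] at h1
    have h3 : (tau - 1) * L.weierstrassP u = 0 := by linear_combination -h1
    rcases mul_eq_zero.mp h3 with h | h
    · exact absurd (sub_eq_zero.mp h) (by
        intro h
        have := congrArg Complex.re h
        rw [tau_re] at this
        norm_num at this)
    · exact h
  have hQu2 : L.derivWeierstrassP u ^ 2 = -1 := by
    rw [hO u huL, hPu]; ring
  have hQw : L.derivWeierstrassP w = 0 := wP'_half ω hω w h2w
  have hQu : L.derivWeierstrassP u = -Complex.I := by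
    rw [hu] at hQu2 ⊢
    rw [hw] at hQw
    exact wP'_u_eq ω hω hO t0 t1 (by rw [ht0]; positivity) (by rw [ht0, ht1]; linarith)
      (by rw [ht1]; linarith) hQu2 hQw
  -- `℘(w) = 1/∛4`
  have hPw : L.weierstrassP w * cbrt4 = 1 := by
    have h1 := hO w hwL
    have h2 := wP_conj_imag ω hω t1
    rw [Complex.conj_eq_iff_real, ← hw] at h2
    obtain ⟨e, he⟩ := h2
    rw [← hL] at he
    rw [hQw, he] at h1
    have h3 : 4 * e ^ 3 = 1 := by
      have : (4 * (e : ℂ) ^ 3) = 1 := by linear_combination -h1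
      exact_mod_cast this
    have h4 : ((4 : ℝ) ^ ((1 : ℝ) / 3)) ^ 3 = 4 := by
      rw [← Real.rpow_natCast, ← Real.rpow_mul (by norm_num)]
      norm_num
    rw [he, cbrt4]
    have h5 : (e * (4 : ℝ) ^ ((1 : ℝ) / 3)) ^ 3 = 1 ^ 3 := by
      rw [mul_pow, h4]; linarith
    have h6 : e * (4 : ℝ) ^ ((1 : ℝ) / 3) = 1 :=
      (Odd.strictMono_pow (by decide : Odd 3)).injective h5
    exact_mod_cast h6
  -- `ζ(u)`
  have hZu : sqrtm3 * zW L u = E := by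
    have h1 := zW_tau ω hω u
    have h2 := zW_add_coe ω hω u _ hl
    rw [htu, h2, ← hL, ← hE] at h1
    have hc : conj (-(ω * (1 + tau)) : ℂ) = ω * tau := by
      rw [map_neg, map_mul, map_add, conj_tau, Complex.conj_ofReal, map_one]
      linear_combination (-ω : ℂ) * tau_sq
    rw [hc] at h1
    have h3 : E / ω * (ω * tau) = E * tau := by field_simp
    rw [h3, tau_sq] at h1
    have ht0 : tau ≠ 0 := by
      intro h
      have := tau_sq
      rw [h] at this
      norm_num at this
    apply mul_left_cancel₀ ht0
    rw [sqrtm3_eq]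
    linear_combination (2 * zW L u) * tau_sq - h1
  have hF := FF_eq_zero ω hω w hwL h2w u
  rw [FF, ← hL, hPu, hQu] at hF
  obtain ⟨z0, hz0⟩ : ∃ z : ℂ, z = sqrtm3 * (ω : ℂ) / 6 := ⟨_, rfl⟩
  rw [← hz0]
  have e1 : u - w = -z0 := by rw [hu', hw', hz0]; ring
  have e2 : u + w = -z0 + 2 * w := by rw [hu', hw', hz0]; ring
  have e3 := zW_add_coe ω hω (-z0) _ h2w
  have hc : conj (2 * w) = -(ω * sqrtm3) := by
    rw [hw', mul_div_cancel₀ _ (two_ne_zero), map_mul, hcS, Complex.conj_ofReal]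
    ring
  rw [← hL, ← hE, hc] at e3
  have h3 : E / ω * -(ω * sqrtm3) = -(E * sqrtm3) := by field_simp
  rw [e1, e2, e3, zW_neg, h3] at hF
  have hES : E * sqrtm3 = 2 * Real.pi * Complex.I / ω := by rw [heta]; field_simp
  have hZu' : zW L u = -(2 * Real.pi * Complex.I / (3 * ω)) := by
    have : zW L u = -(E * sqrtm3) / 3 := by
      rw [← hZu]; linear_combination (zW L u / 3) * hS
    rw [this, hES]
    field_simp
  rw [hZu', hES] at hF
  have hfin : 2 * zW L z0 = -(2 * Real.pi * Complex.I / ω)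
      + 2 * (2 * Real.pi * Complex.I / (3 * ω)) - Complex.I * cbrt4 := by
    linear_combination cbrt4 * hF + (-2 * zW L z0 - (2 * Real.pi * Complex.I / ω)
      + 2 * (2 * Real.pi * Complex.I / (3 * ω))) * hPw
  have : zW L z0 = (-(2 * Real.pi * Complex.I / ω)
      + 2 * (2 * Real.pi * Complex.I / (3 * ω)) - Complex.I * cbrt4) / 2 := by
    rw [← hfin]; ring
  rw [this]
  field_simp
  ring
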